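/- arXiv:2111.06148 — 2 statements merged into one kernel-verified Lean document; each statement's English description precedes it below -/
import Mathlib

section
/- Let U : ℝ^d → ℝ have gradient ξ = ∇U thrice differentiable, with U(x) → +∞ as |x| → ∞. Let α ∈ ℝ be such that ℳ_α = {x : U(x) = α} is nonempty and ℳ_α ⊆ 𝒩^c where 𝒩 = {ξ = 0}. Fix x ∈ ℳ_α, v ∈ ℝ^d, T > 0, set r = (|x|² + |v|²)^{1/2}, and for h > 0 let z^h(t) = (φ_h)^n(x,v) for nh ≤ t < (n+1)h (n = 0,1,2,…). Then the ODE ζ'(t) = 𝐚(ζ(t)) + (0, 𝐛(ζ(t))) with ζ(0) = (x, P(x)v) has a unique solution ζ(t) = (x(t),w(t)) on [0,T], and there exist H > 0 and C > 0 such that for every 0 < h < H: sup_{0 ≤ t ≤ T} |𝐩(z^h(t)) − ζ(t)| ≤ h·C. -/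
open MeasureTheory
open scoped ENNReal RealInnerProductSpace

/-- The circle transform with angle `h` on `ℝ^d × ℝ^d`. -/
noncomputable def circleT (d : ℕ) (h : ℝ)
    (z : EuclideanSpace ℝ (Fin d) × EuclideanSpace ℝ (Fin d)) :
    EuclideanSpace ℝ (Fin d) × EuclideanSpace ℝ (Fin d) :=
  (Real.cos h • z.1 + Real.sin h • z.2, -(Real.sin h) • z.1 + Real.cos h • z.2)

/-- The normalized vector field `ξ̄(x) = ξ(x)/|ξ(x)|` (junk value `0` on `𝒩 = {ξ = 0}`). -/
noncomputable def xibar (d : ℕ) (ξ : EuclideanSpace ℝ (Fin d) → EuclideanSpace ℝ (Fin d))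
    (x : EuclideanSpace ℝ (Fin d)) : EuclideanSpace ℝ (Fin d) :=
  ‖ξ x‖⁻¹ • ξ x

open Classical in
/-- The reflection `R(x)v = v − 2(ξ̄(x)ᵀv)ξ̄(x)` for `x ∉ 𝒩`, and `R(x)v = −v` for `x ∈ 𝒩`. -/
noncomputable def reflT (d : ℕ) (ξ : EuclideanSpace ℝ (Fin d) → EuclideanSpace ℝ (Fin d))
    (x v : EuclideanSpace ℝ (Fin d)) : EuclideanSpace ℝ (Fin d) :=
  if ξ x = 0 then -v else v - (2 * ⟪xibar d ξ x, v⟫) • xibar d ξ x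

/-- The bounce transform `Φ_bounce(x,v) = (x, R(x)v)`. -/
noncomputable def bounceT (d : ℕ) (ξ : EuclideanSpace ℝ (Fin d) → EuclideanSpace ℝ (Fin d))
    (z : EuclideanSpace ℝ (Fin d) × EuclideanSpace ℝ (Fin d)) :
    EuclideanSpace ℝ (Fin d) × EuclideanSpace ℝ (Fin d) :=
  (z.1, reflT d ξ z.1 z.2)

/-- The tangential projection `P(x)v = v − (ξ̄(x)ᵀv)ξ̄(x)`. -/
noncomputable def tangP (d : ℕ) (ξ : EuclideanSpace ℝ (Fin d) → EuclideanSpace ℝ (Fin d))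
    (x v : EuclideanSpace ℝ (Fin d)) : EuclideanSpace ℝ (Fin d) :=
  v - ⟪xibar d ξ x, v⟫ • xibar d ξ x

/-- The projection `𝐩(x,v) = (x, P(x)v)`. -/
noncomputable def pbf (d : ℕ) (ξ : EuclideanSpace ℝ (Fin d) → EuclideanSpace ℝ (Fin d))
    (z : EuclideanSpace ℝ (Fin d) × EuclideanSpace ℝ (Fin d)) :
    EuclideanSpace ℝ (Fin d) × EuclideanSpace ℝ (Fin d) :=
  (z.1, tangP d ξ z.1 z.2)

/-- The level set `ℳ_α = {x : U(x) = α}`. -/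
def Mlevel (d : ℕ) (U : EuclideanSpace ℝ (Fin d) → ℝ) (α : ℝ) :
    Set (EuclideanSpace ℝ (Fin d)) :=
  {x | U x = α}

/-- The drift `𝐛(x,w) = −2(r²−|w|²−|x|²)·Dξ̄(x)ξ̄(x) − 2(wᵀDξ̄(x)w)·ξ̄(x)` of
the limit ODE. -/
noncomputable def limb (d : ℕ) (ξ : EuclideanSpace ℝ (Fin d) → EuclideanSpace ℝ (Fin d))
    (r : ℝ) (x w : EuclideanSpace ℝ (Fin d)) : EuclideanSpace ℝ (Fin d) :=
  (-2 * (r ^ 2 - ‖w‖ ^ 2 - ‖x‖ ^ 2)) • fderiv ℝ (xibar d ξ) x (xibar d ξ x)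
    + (-2 * ⟪w, fderiv ℝ (xibar d ξ) x w⟫) • xibar d ξ x

/-!
In one step the circle turns `(x, v)` to first order by `h (v, -x)` and the bounce replaces `v` by
`R(x)v = 2 P(x)v - v`. Hence `φ_h(x, v) - (x, R(x)v)` is of order `h`, and since `P R = P` the
projected step `𝐩 ∘ φ_h` differs from `𝐩` by `O(h)`. Its derivative at `h = 0` depends on the normal
speed `λ = ⟪ξ̄(x), v⟫` only through `λ²`, which the conserved energy `|x|² + |v|² = r²` expresses by
`𝐩(x, v)`. So `𝐩(z^h)` is an Euler scheme, with `O(h²)` local error, for the limit ODE.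

The limit ODE preserves tangency `⟪ξ̄(x), w⟫ = 0`, hence also the value of `U`; and
`r² - |x|² - |w|²` solves a scalar linear equation along it, hence stays nonnegative. Solutions are
therefore confined to a compact set on which the field is `C¹`.
-/

open Set Filter Topology
open scoped NNReal Manifold ContDiff

section Calculus

theorem nonneg_of_hasDerivAt_mul_self {f a : ℝ → ℝ} {s t : ℝ} (hst : s ≤ t)
    (ha : ContinuousOn a (Icc s t)) (hf : ∀ u ∈ Icc s t, HasDerivAt f (a u * f u) u)
    (h0 : 0 ≤ f s) : 0 ≤ f t := by
  by_contra! hneg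
  have hcont : ContinuousOn f (Icc s t) := HasDerivAt.continuousOn hf
  obtain ⟨u, hu, hu0⟩ := intermediate_value_Icc' hst hcont ⟨hneg.le, h0⟩
  obtain ⟨M, hM⟩ := isCompact_Icc.exists_bound_of_continuousOn ha
  have hsub : Icc u t ⊆ Icc s t := Icc_subset_Icc_left hu.1
  have hzero := eq_zero_of_abs_deriv_le_mul_abs_self_of_eq_zero_right (K := M) (hcont.mono hsub)
    (fun q hq => (hf q (hsub (Ico_subset_Icc_self hq))).hasDerivWithinAt) hu0
    (fun q hq => by
      rw [norm_mul]
      gcongr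
      exact hM q (hsub (Ico_subset_Icc_self hq)))
    t (right_mem_Icc.2 hu.2)
  exact hneg.ne hzero

theorem inner_fderiv_eq_zero_of_norm_eq_one {E F : Type*} [NormedAddCommGroup E]
    [NormedSpace ℝ E] [NormedAddCommGroup F] [InnerProductSpace ℝ F] {N : E → F} {a : E}
    (hN : DifferentiableAt ℝ N a) (hunit : ∀ᶠ y in 𝓝 a, ‖N y‖ = 1) (u : E) :
    ⟪N a, fderiv ℝ N a u⟫ = 0 := by
  have hconst : (fun y => ‖N y‖ ^ 2) =ᶠ[𝓝 a] fun _ => 1 := hunit.mono fun y hy => by simp [hy]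
  have hderiv := hN.hasFDerivAt.norm_sq.fderiv.symm.trans hconst.fderiv_eq
  simpa using DFunLike.congr_fun hderiv u

end Calculus

section Taylor

variable {E F G : Type*} [NormedAddCommGroup E] [NormedSpace ℝ E] [NormedAddCommGroup F]
  [NormedSpace ℝ F] [NormedAddCommGroup G] [NormedSpace ℝ G]

theorem exists_eventually_norm_sub_sub_fderiv_le {f : E → F} {a : E} (hf : ContDiffAt ℝ 2 f a) :
    ∃ C : ℝ, ∀ᶠ p in 𝓝 (a, a),
      ‖f p.2 - f p.1 - fderiv ℝ f p.1 (p.2 - p.1)‖ ≤ C * ‖p.2 - p.1‖ ^ 2 := by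
  obtain ⟨K, s, hs, hK⟩ :=
    (hf.fderiv_right (m := 1) (by norm_num)).exists_lipschitzOnWith
  have hd : ∀ᶠ y in 𝓝 a, DifferentiableAt ℝ f y :=
    (hf.eventually (by simp)).mono fun y hy => hy.differentiableAt (by simp)
  obtain ⟨ε, hε, hball⟩ := Metric.mem_nhds_iff.1 (inter_mem hs hd)
  have hnear := Metric.ball_mem_nhds a hε
  refine ⟨K, ?_⟩
  filter_upwards [prod_mem_nhds hnear hnear] with ⟨x, y⟩ ⟨hx, hy⟩
  have hseg : segment ℝ x y ⊆ Metric.ball a ε := (convex_ball a ε).segment_subset hx hy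
  have hfd : ∀ u ∈ segment ℝ x y, ‖fderiv ℝ f u - fderiv ℝ f x‖ ≤ K * ‖y - x‖ := fun u hu => by
    rw [← dist_eq_norm]
    refine (hK.dist_le_mul u (hball (hseg hu)).1 x (hball hx).1).trans ?_
    gcongr
    simpa [dist_eq_norm] using norm_sub_le_of_mem_segment hu
  calc _ ≤ K * ‖y - x‖ * ‖y - x‖ :=
        (convex_segment x y).norm_image_sub_le_of_norm_fderiv_le'
          (fun u hu => (hball (hseg hu)).2) hfd (left_mem_segment ℝ x y) (right_mem_segment ℝ x y)
    _ = _ := by ring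

theorem exists_eventually_forall_norm_step_sub_le {K : Set G} (hK : IsCompact K)
    {Φ : ℝ → G → F} (hΦ : ∀ z ∈ K, ContDiffAt ℝ 2 (fun p : ℝ × G => Φ p.1 p.2) (0, z))
    {c : G → F} (hc : ∀ z ∈ K, HasDerivAt (fun h => Φ h z) (c z) 0) :
    ∃ C : ℝ, ∀ᶠ h in 𝓝 (0 : ℝ), ∀ z ∈ K, ‖Φ h z - Φ 0 z - h • c z‖ ≤ C * h ^ 2 := by
  have hloc : ∀ a ∈ K, ∃ C : ℝ, ∃ s ∈ 𝓝 a, ∀ᶠ h in 𝓝 (0 : ℝ), ∀ z ∈ K ∩ s,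
      ‖Φ h z - Φ 0 z - h • c z‖ ≤ C * h ^ 2 := fun a ha => by
    obtain ⟨C, hC⟩ := exists_eventually_norm_sub_sub_fderiv_le (hΦ a ha)
    have hlim : Tendsto (fun p : ℝ × G => (((0 : ℝ), p.2), p)) (𝓝 (0, a)) (𝓝 ((0, a), (0, a))) :=
      Continuous.tendsto' (by fun_prop) _ _ rfl
    obtain ⟨P, hP, Q, hQ, hPQ⟩ :=
      eventually_prod_iff.1 (nhds_prod_eq (X := ℝ) (Y := G) ▸ hlim.eventually hC)
    refine ⟨C, {z | Q z}, hQ, hP.mono fun h hh z ⟨hzK, hz⟩ => ?_⟩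
    have hderiv : fderiv ℝ (fun p : ℝ × G => Φ p.1 p.2) (0, z) (h, 0) = h • c z := by
      have hline : HasDerivAt (fun t : ℝ => (t, z)) ((1 : ℝ), (0 : G)) 0 :=
        (hasDerivAt_id 0).prodMk (hasDerivAt_const 0 z)
      have hfderiv := ((hΦ z hzK).differentiableAt (by simp)).hasFDerivAt
      have hchain := hfderiv.comp_hasDerivAt (f := fun t : ℝ => (t, z)) 0 hline
      rw [(hc z hzK).unique hchain, ← map_smul, Prod.smul_mk, smul_eq_mul, mul_one, smul_zero]
    simpa [hderiv, Prod.norm_def] using hPQ hh hz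
  choose! C s hs hCs using hloc
  obtain ⟨t, htK, htcover⟩ := hK.elim_nhds_subcover s hs
  refine ⟨∑ a ∈ t, |C a|, ?_⟩
  filter_upwards [(eventually_all_finset t).2 fun a ha => hCs a (htK a ha)] with h hh z hz
  obtain ⟨a, hat, haz⟩ := mem_iUnion₂.1 (htcover hz)
  calc _ ≤ C a * h ^ 2 := hh a hat z ⟨hz, haz⟩
    _ ≤ |C a| * h ^ 2 := by gcongr; exact le_abs_self _
    _ ≤ (∑ a ∈ t, |C a|) * h ^ 2 := by
      gcongr
      exact Finset.single_le_sum (f := fun a => |C a|) (fun _ _ => abs_nonneg _) hat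

end Taylor

section AutonomousODE

variable {G : Type*} [NormedAddCommGroup G] [NormedSpace ℝ G] {c : G → G} {O Γ K : Set G}

theorem exists_lipschitzOnWith_of_contDiffAt (hK : IsCompact K)
    (hc : ∀ z ∈ K, ContDiffAt ℝ 1 c z) : ∃ L, LipschitzOnWith L c K :=
  LocallyLipschitzOn.exists_lipschitzOnWith_of_compact hK fun z hz =>
    let ⟨L, s, hs, hL⟩ := (hc z hz).exists_lipschitzOnWith
    ⟨L, s, mem_nhdsWithin_of_mem_nhds hs, hL⟩

theorem exists_contDiff_hasCompactSupport_eqOn_nhds [FiniteDimensional ℝ G] (hΓ : IsCompact Γ)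
    (hO : IsOpen O) (hΓO : Γ ⊆ O) (hc : ∀ z ∈ O, ContDiffAt ℝ 1 c z) :
    ∃ c' : G → G, ContDiff ℝ 1 c' ∧ HasCompactSupport c' ∧
      ∃ V, IsOpen V ∧ Γ ⊆ V ∧ V ⊆ O ∧ EqOn c' c V := by
  obtain ⟨S, hS, hΓS, hSO⟩ := exists_compact_between hΓ hO hΓO
  obtain ⟨χ, hχ_one, hχ_zero, -⟩ := exists_contMDiffMap_one_nhds_of_subset_interior
    (n := 1) 𝓘(ℝ, G) hΓ.isClosed hΓS
  obtain ⟨W, hW, hΓW, hχW⟩ := eventually_nhdsSet_iff_exists.1 hχ_one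
  refine ⟨fun z => χ z • c z, contDiff_iff_contDiffAt.2 fun z => ?_,
    .intro hS fun z hz => by simp only [hχ_zero z hz, zero_smul], W ∩ O, hW.inter hO,
    subset_inter hΓW hΓO, inter_subset_right, fun z hz => by simp only [hχW z hz.1, one_smul]⟩
  by_cases hz : z ∈ O
  · exact χ.contMDiff.contDiff.contDiffAt.smul (hc z hz)
  · refine contDiffAt_const (c := (0 : G)) |>.congr_of_eventuallyEq ?_
    filter_upwards [hS.isClosed.isOpen_compl.mem_nhds fun hzS => hz (hSO hzS)] with y hy
    rw [hχ_zero y hy, zero_smul]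

theorem exists_forall_hasDerivAt_of_lipschitzWith_of_bounded [CompleteSpace G] {L M : ℝ≥0}
    (hL : LipschitzWith L c) (hM : ∀ z, ‖c z‖ ≤ M) (z₀ : G) {T : ℝ} (hT : 0 ≤ T) :
    ∃ ζ : ℝ → G, ζ 0 = z₀ ∧ ∀ t ∈ Icc 0 T, HasDerivAt ζ (c (ζ t)) t := by
  have h0 : (0 : ℝ) ∈ Icc (-1) (T + 1) := ⟨by norm_num, by linarith⟩
  have hpicard : IsPicardLindelof (fun _ => c) (⟨0, h0⟩ : Icc (-1) (T + 1)) z₀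
      (M * (T + 1).toNNReal) 0 M L := by
    refine .of_time_independent (fun z _ => hM z) hL.lipschitzOnWith ?_
    simp [max_eq_left (show (1 : ℝ) ≤ T + 1 by linarith),
      Real.coe_toNNReal _ (show (0 : ℝ) ≤ T + 1 by linarith)]
  obtain ⟨ζ, hζ0, hζ⟩ := hpicard.exists_eq_forall_mem_Icc_hasDerivWithinAt₀
  exact ⟨ζ, hζ0, fun t ht => (hζ t ⟨by linarith [ht.1], by linarith [ht.2]⟩).hasDerivAt
    (Icc_mem_nhds (by linarith [ht.1]) (by linarith [ht.2]))⟩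

/-- Forward invariance of `Γ` under `ζ' = c ζ`, for solutions that are known to stay in the region
`O` where the field is regular. -/
def ForwardInvariantIn (c : G → G) (O Γ : Set G) : Prop :=
  ∀ ⦃ζ : ℝ → G⦄ ⦃s t : ℝ⦄, s ≤ t → (∀ u ∈ Icc s t, HasDerivAt ζ (c (ζ u)) u) →
    MapsTo ζ (Icc s t) O → ζ s ∈ Γ → ζ t ∈ Γ

theorem ForwardInvariantIn.congr {c' : G → G} {V : Set G} (h : ForwardInvariantIn c O Γ)
    (hVO : V ⊆ O) (hcc' : EqOn c' c V) : ForwardInvariantIn c' V Γ :=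
  fun _ _ _ hst hζ hmaps =>
    h hst (fun u hu => hcc' (hmaps hu) ▸ hζ u hu) (hmaps.mono_right hVO)

theorem ForwardInvariantIn.mapsTo (h : ForwardInvariantIn c O Γ) (hO : IsOpen O)
    (hΓ : IsClosed Γ) (hΓO : Γ ⊆ O) {ζ : ℝ → G} {T : ℝ}
    (hζ : ∀ t ∈ Icc 0 T, HasDerivAt ζ (c (ζ t)) t) (h0 : ζ 0 ∈ Γ) : MapsTo ζ (Icc 0 T) Γ := by
  have hcont : ContinuousOn ζ (Icc 0 T) := HasDerivAt.continuousOn hζ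
  have hclosed : IsClosed (ζ ⁻¹' Γ ∩ Icc 0 T) := by
    rw [inter_comm]
    exact hcont.preimage_isClosed_of_isClosed isClosed_Icc hΓ
  refine hclosed.Icc_subset_of_forall_mem_nhdsWithin h0 fun s ⟨hsΓ, hs⟩ => ?_
  have hnear : ∀ᶠ u in 𝓝 s, ζ u ∈ O :=
    (hζ s (Ico_subset_Icc_self hs)).continuousAt.eventually (hO.mem_nhds (hΓO hsΓ))
  obtain ⟨ε, hε, hball⟩ := Metric.eventually_nhds_iff.1 hnear
  filter_upwards [Ioo_mem_nhdsGT (lt_min hs.2 (lt_add_of_pos_right s hε))] with t ht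
  have hst := ht.1
  obtain ⟨htT, htε⟩ := lt_min_iff.1 ht.2
  refine h hst.le (fun u hu => hζ u ⟨hs.1.trans hu.1, hu.2.trans htT.le⟩) (fun u hu => hball ?_) hsΓ
  rw [Real.dist_eq, abs_of_nonneg (sub_nonneg.2 hu.1)]
  linarith [hu.2]

theorem ForwardInvariantIn.exists_solution [FiniteDimensional ℝ G] (h : ForwardInvariantIn c O Γ)
    (hO : IsOpen O) (hΓ : IsCompact Γ) (hΓO : Γ ⊆ O) (hc : ∀ z ∈ O, ContDiffAt ℝ 1 c z) {z₀ : G}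
    (hz₀ : z₀ ∈ Γ) {T : ℝ} (hT : 0 ≤ T) :
    ∃ ζ : ℝ → G, ζ 0 = z₀ ∧ ∀ t ∈ Icc 0 T, HasDerivAt ζ (c (ζ t)) t := by
  obtain ⟨c', hc', hsupp, V, hV, hΓV, hVO, hEq⟩ :=
    exists_contDiff_hasCompactSupport_eqOn_nhds hΓ hO hΓO hc
  obtain ⟨L, hL⟩ := hc'.lipschitzWith_of_hasCompactSupport hsupp one_ne_zero
  obtain ⟨M, hM⟩ := hsupp.exists_bound_of_continuous hc'.continuous
  obtain ⟨ζ, rfl, hζ⟩ := exists_forall_hasDerivAt_of_lipschitzWith_of_bounded hL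
    (fun z => (hM z).trans (Real.le_coe_toNNReal M)) z₀ hT
  have hΓζ : MapsTo ζ (Icc 0 T) Γ := (h.congr hVO hEq).mapsTo hV hΓ.isClosed hΓV hζ hz₀
  exact ⟨ζ, rfl, fun t ht => hEq (hΓV (hΓζ ht)) ▸ hζ t ht⟩

theorem eqOn_of_hasDerivAt_of_mapsTo {L : ℝ≥0} (hL : LipschitzOnWith L c Γ) {ζ ζ' : ℝ → G} {T : ℝ}
    (hζ : ∀ t ∈ Icc 0 T, HasDerivAt ζ (c (ζ t)) t) (hζΓ : MapsTo ζ (Icc 0 T) Γ)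
    (hζ' : ∀ t ∈ Icc 0 T, HasDerivAt ζ' (c (ζ' t)) t) (hζ'Γ : MapsTo ζ' (Icc 0 T) Γ)
    (h0 : ζ 0 = ζ' 0) : EqOn ζ ζ' (Icc 0 T) :=
  ODE_solution_unique_of_mem_Icc_right (v := fun _ => c) (s := fun _ => Γ) (fun _ _ => hL)
    (HasDerivAt.continuousOn hζ) (fun t ht => (hζ t (Ico_subset_Icc_self ht)).hasDerivWithinAt)
    (fun _ ht => hζΓ (Ico_subset_Icc_self ht))
    (HasDerivAt.continuousOn hζ') (fun t ht => (hζ' t (Ico_subset_Icc_self ht)).hasDerivWithinAt)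
    (fun _ ht => hζ'Γ (Ico_subset_Icc_self ht)) h0

end AutonomousODE

section EulerScheme

theorem le_of_forall_le_bound_imp_le {e : ℕ → ℝ} {L Q T h : ℝ} (hL : 0 ≤ L) (hQ : 0 ≤ Q)
    (hh : 0 < h) (he : ∀ n, 0 ≤ e n) (he0 : e 0 = 0)
    (hstep : ∀ n : ℕ, (n + 1) * h ≤ T → e n ≤ h * (Q * T * Real.exp (L * T)) →
      e (n + 1) ≤ (1 + L * h) * e n + Q * h ^ 2) (n : ℕ) (hn : n * h ≤ T) :
    e n ≤ h * (Q * T * Real.exp (L * T)) := by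
  induction n using Nat.strong_induction_on with
  | _ n ih =>
    -- Freezing `e` after time `n` makes the recursion hold at every step.
    have htrunc : ∀ k ≥ 0, e (min (k + 1) n) ≤ (1 + L * h) * e (min k n) + Q * h ^ 2 :=
      fun k _ => by
        rcases lt_or_ge k n with hk | hk
        · have hkn : (k + 1 : ℝ) ≤ n := by exact_mod_cast hk
          have hkT : (k + 1) * h ≤ T := (mul_le_mul_of_nonneg_right hkn hh.le).trans hn
          rw [min_eq_left hk.le, min_eq_left (Nat.succ_le_of_lt hk)]
          exact hstep k hkT (ih k hk (by linarith))
        · rw [min_eq_right hk, min_eq_right (hk.trans k.le_succ)]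
          nlinarith [he n, mul_nonneg (mul_nonneg hL hh.le) (he n), mul_nonneg hQ (sq_nonneg h)]
    have hgronwall := discrete_gronwall (u := fun k => e (min k n)) (c := fun _ => L * h)
      (b := fun _ => Q * h ^ 2) (he _) htrunc (fun _ _ => by positivity)
      (fun _ _ => by positivity) n.zero_le
    simp only [min_self, Nat.zero_min, he0, zero_add, Finset.sum_const, Nat.card_Ico, tsub_zero,
      nsmul_eq_mul] at hgronwall
    calc e n ≤ n * (Q * h ^ 2) * Real.exp (n * (L * h)) := hgronwall
      _ = h * (Q * (n * h) * Real.exp (L * (n * h))) := by ring_nf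
      _ ≤ h * (Q * T * Real.exp (L * T)) := by
        have : 0 ≤ Q * T := mul_nonneg hQ (le_trans (by positivity) hn)
        gcongr

variable {G : Type*} [NormedAddCommGroup G] [NormedSpace ℝ G] {c : G → G} {K : Set G}
  {L : ℝ≥0} {M T : ℝ} {ζ : ℝ → G}

theorem norm_solution_sub_le (hM : ∀ z ∈ K, ‖c z‖ ≤ M)
    (hζ : ∀ t ∈ Icc 0 T, HasDerivAt ζ (c (ζ t)) t) (hζK : MapsTo ζ (Icc 0 T) K) {s t : ℝ}
    (hs : 0 ≤ s) (hst : s ≤ t) (ht : t ≤ T) : ‖ζ t - ζ s‖ ≤ M * (t - s) := by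
  have hmean := Convex.norm_image_sub_le_of_norm_hasDerivWithin_le
    (fun u hu => (hζ u hu).hasDerivWithinAt) (fun u hu => hM _ (hζK hu)) (convex_Icc 0 T)
    ⟨hs, hst.trans ht⟩ ⟨hs.trans hst, ht⟩
  rwa [Real.norm_of_nonneg (sub_nonneg.2 hst)] at hmean

theorem norm_solution_sub_sub_smul_le (hL : LipschitzOnWith L c K) (hM : ∀ z ∈ K, ‖c z‖ ≤ M)
    (hζ : ∀ t ∈ Icc 0 T, HasDerivAt ζ (c (ζ t)) t) (hζK : MapsTo ζ (Icc 0 T) K) {t h : ℝ}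
    (ht : 0 ≤ t) (hh : 0 ≤ h) (hT : t + h ≤ T) :
    ‖ζ (t + h) - ζ t - h • c (ζ t)‖ ≤ L * M * h ^ 2 := by
  have hsub : Icc t (t + h) ⊆ Icc 0 T := Icc_subset_Icc ht hT
  have hM0 : 0 ≤ M := (norm_nonneg _).trans (hM _ (hζK (hsub ⟨le_rfl, by linarith⟩)))
  have hderiv : ∀ u ∈ Icc t (t + h),
      HasDerivWithinAt (fun u => ζ u - u • c (ζ t)) (c (ζ u) - c (ζ t)) (Icc t (t + h)) u :=
    fun u hu => by
      simpa using ((hζ u (hsub hu)).fun_sub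
        ((hasDerivAt_id u).smul_const (c (ζ t)))).hasDerivWithinAt
  have hbound : ∀ u ∈ Icc t (t + h), ‖c (ζ u) - c (ζ t)‖ ≤ L * (M * h) := fun u hu => by
    rw [← dist_eq_norm]
    refine (hL.dist_le_mul _ (hζK (hsub hu)) _ (hζK (hsub ⟨le_rfl, by linarith⟩))).trans ?_
    rw [dist_eq_norm]
    gcongr
    refine (norm_solution_sub_le hM hζ hζK ht hu.1 (hu.2.trans hT)).trans ?_
    gcongr
    linarith [hu.2]
  have hmean := (convex_Icc t (t + h)).norm_image_sub_le_of_norm_hasDerivWithin_le hderiv hbound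
    ⟨le_rfl, by linarith⟩ ⟨by linarith, le_rfl⟩
  rw [add_sub_cancel_left, Real.norm_of_nonneg hh] at hmean
  calc ‖ζ (t + h) - ζ t - h • c (ζ t)‖
      = ‖ζ (t + h) - (t + h) • c (ζ t) - (ζ t - t • c (ζ t))‖ := by congr 1; module
    _ ≤ L * (M * h) * h := hmean
    _ = L * M * h ^ 2 := by ring

theorem norm_euler_sub_solution_le (hL : LipschitzOnWith L c K) (hM : ∀ z ∈ K, ‖c z‖ ≤ M)
    (hζ : ∀ t ∈ Icc 0 T, HasDerivAt ζ (c (ζ t)) t) (hζK : MapsTo ζ (Icc 0 T) K) {y : ℕ → G}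
    {h C δ : ℝ} (hh : 0 < h) (hC : 0 ≤ C) (hy0 : y 0 = ζ 0)
    (hδ : h * ((C + L * M) * T * Real.exp (L * T)) ≤ δ)
    (hy : ∀ n : ℕ, n * h ≤ T → ‖y n - ζ (n * h)‖ ≤ δ →
      y n ∈ K ∧ ‖y (n + 1) - y n - h • c (y n)‖ ≤ C * h ^ 2) (n : ℕ) (hn : n * h ≤ T) :
    ‖y n - ζ (n * h)‖ ≤ h * ((C + L * M) * T * Real.exp (L * T)) := by
  have hT0 : 0 ≤ T := le_trans (by positivity) hn
  have hM0 : 0 ≤ M := (norm_nonneg _).trans (hM _ (hζK ⟨le_rfl, hT0⟩))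
  refine le_of_forall_le_bound_imp_le (e := fun n => ‖y n - ζ (n * h)‖) L.2 (by positivity) hh
    (fun _ => norm_nonneg _) (by simp [hy0]) (fun n hnT hbound => ?_) n hn
  have hnT' : n * h + h ≤ T := by linarith
  have hn0 : 0 ≤ n * h := by positivity
  obtain ⟨hynK, hdefect⟩ := hy n (by linarith) (hbound.trans hδ)
  have hsol := norm_solution_sub_sub_smul_le hL hM hζ hζK hn0 hh.le hnT'
  have hlip : ‖h • (c (y n) - c (ζ (n * h)))‖ ≤ h * (L * ‖y n - ζ (n * h)‖) := by
    rw [norm_smul, Real.norm_of_nonneg hh.le, ← dist_eq_norm, ← dist_eq_norm]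
    gcongr
    exact hL.dist_le_mul _ hynK _ (hζK ⟨hn0, by linarith⟩)
  have hsplit : y (n + 1) - ζ ((n + 1 : ℕ) * h) =
      (y n - ζ (n * h)) + h • (c (y n) - c (ζ (n * h))) + (y (n + 1) - y n - h • c (y n))
        - (ζ (n * h + h) - ζ (n * h) - h • c (ζ (n * h))) := by
    rw [show ((n + 1 : ℕ) : ℝ) * h = n * h + h by push_cast; ring]
    module
  calc ‖y (n + 1) - ζ ((n + 1 : ℕ) * h)‖ ≤ ‖y n - ζ (n * h)‖ + h * (L * ‖y n - ζ (n * h)‖)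
        + C * h ^ 2 + L * M * h ^ 2 := by
        rw [hsplit]
        exact norm_sub_le_of_le (norm_add_le_of_le (norm_add_le_of_le le_rfl hlip) hdefect) hsol
    _ = (1 + L * h) * ‖y n - ζ (n * h)‖ + (C + L * M) * h ^ 2 := by ring

theorem exists_forall_norm_euler_floor_sub_solution_le (hK : IsCompact K)
    (hc : ∀ z ∈ K, ContDiffAt ℝ 1 c z) (hT : 0 ≤ T)
    (hζ : ∀ t ∈ Icc 0 T, HasDerivAt ζ (c (ζ t)) t) (hζK : MapsTo ζ (Icc 0 T) K) {C δ : ℝ}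
    (hC : 0 ≤ C) (hδ : 0 < δ) :
    ∃ H > 0, ∃ B > 0, ∀ h, 0 < h → h < H → ∀ y : ℕ → G, y 0 = ζ 0 →
      (∀ n : ℕ, n * h ≤ T → ‖y n - ζ (n * h)‖ ≤ δ →
        y n ∈ K ∧ ‖y (n + 1) - y n - h • c (y n)‖ ≤ C * h ^ 2) →
      ∀ t ∈ Icc 0 T, ‖y ⌊t / h⌋₊ - ζ t‖ ≤ h * B := by
  obtain ⟨L, hL⟩ := exists_lipschitzOnWith_of_contDiffAt hK hc
  obtain ⟨M, hM0, hM⟩ :=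
    (hK.image_of_continuousOn hL.continuousOn).isBounded.exists_pos_norm_le
  replace hM : ∀ z ∈ K, ‖c z‖ ≤ M := forall_mem_image.1 hM
  set B := (C + L * M) * T * Real.exp (L * T)
  have : 0 ≤ B := by positivity
  refine ⟨δ / (B + 1), by positivity, B + M, by positivity, fun h hh hhH y hy0 hy t ht => ?_⟩
  have hhB : h * B ≤ δ := by
    rw [lt_div_iff₀ (by positivity)] at hhH
    nlinarith
  have hle : ⌊t / h⌋₊ * h ≤ t := (le_div_iff₀ hh).1 (Nat.floor_le (div_nonneg ht.1 hh.le))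
  have hlt : t < (⌊t / h⌋₊ + 1) * h := (div_lt_iff₀ hh).1 (Nat.lt_floor_add_one _)
  have hgrid := norm_euler_sub_solution_le hL hM hζ hζK hh hC hy0 hhB hy _ (hle.trans ht.2)
  have hinterp := norm_solution_sub_le hM hζ hζK (by positivity) hle ht.2
  rw [norm_sub_rev] at hinterp
  calc ‖y ⌊t / h⌋₊ - ζ t‖ ≤ ‖y ⌊t / h⌋₊ - ζ (⌊t / h⌋₊ * h)‖ + ‖ζ (⌊t / h⌋₊ * h) - ζ t‖ :=
        norm_sub_le_norm_sub_add_norm_sub _ _ _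
    _ ≤ h * B + M * (t - ⌊t / h⌋₊ * h) := add_le_add hgrid hinterp
    _ ≤ h * B + M * h := by gcongr; linarith
    _ = h * (B + M) := by ring

end EulerScheme

/-- The phase space `ℝ^d × ℝ^d` of pairs (position, velocity). -/
abbrev Phase (d : ℕ) := EuclideanSpace ℝ (Fin d) × EuclideanSpace ℝ (Fin d)

section UnitNormal

variable {d : ℕ} {ξ : EuclideanSpace ℝ (Fin d) → EuclideanSpace ℝ (Fin d)}
  {x v : EuclideanSpace ℝ (Fin d)}

theorem norm_xibar (hx : ξ x ≠ 0) : ‖xibar d ξ x‖ = 1 :=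
  norm_smul_inv_norm (𝕜 := ℝ) hx

theorem inner_xibar_self (hx : ξ x ≠ 0) : ⟪xibar d ξ x, xibar d ξ x⟫ = 1 := by
  rw [real_inner_self_eq_norm_sq, norm_xibar hx, one_pow]

theorem inner_xibar_eq_zero_iff (hx : ξ x ≠ 0) : ⟪xibar d ξ x, v⟫ = 0 ↔ ⟪ξ x, v⟫ = 0 := by
  simp [xibar, real_inner_smul_left, hx]

theorem contDiffAt_xibar {n : WithTop ℕ∞} (hξ : ContDiffAt ℝ n ξ x) (hx : ξ x ≠ 0) :
    ContDiffAt ℝ n (xibar d ξ) x :=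
  ((hξ.norm ℝ hx).inv (norm_ne_zero_iff.2 hx)).smul hξ

theorem differentiableAt_xibar (hξ : ContDiffAt ℝ 1 ξ x) (hx : ξ x ≠ 0) :
    DifferentiableAt ℝ (xibar d ξ) x :=
  (contDiffAt_xibar hξ hx).differentiableAt one_ne_zero

theorem inner_xibar_fderiv_xibar (hξ : ContDiffAt ℝ 1 ξ x) (hx : ξ x ≠ 0)
    (u : EuclideanSpace ℝ (Fin d)) : ⟪xibar d ξ x, fderiv ℝ (xibar d ξ) x u⟫ = 0 :=
  inner_fderiv_eq_zero_of_norm_eq_one (differentiableAt_xibar hξ hx)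
    ((hξ.continuousAt.eventually_ne hx).mono fun _ => norm_xibar) u

theorem inner_xibar_tangP (hx : ξ x ≠ 0) : ⟪xibar d ξ x, tangP d ξ x v⟫ = 0 := by
  rw [tangP, inner_sub_right, inner_smul_right, inner_xibar_self hx, mul_one, sub_self]

theorem norm_tangP_sq (hx : ξ x ≠ 0) :
    ‖tangP d ξ x v‖ ^ 2 = ‖v‖ ^ 2 - ⟪xibar d ξ x, v⟫ ^ 2 := by
  simp only [tangP, norm_sub_sq_real, norm_smul, norm_xibar hx, inner_smul_right,
    real_inner_comm v, Real.norm_eq_abs, mul_one, sq_abs]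
  ring

theorem reflT_eq (hx : ξ x ≠ 0) : reflT d ξ x v = (2 : ℝ) • tangP d ξ x v - v := by
  rw [reflT, if_neg hx, tangP]
  module

theorem norm_reflT : ‖reflT d ξ x v‖ = ‖v‖ := by
  by_cases hx : ξ x = 0
  · rw [reflT, if_pos hx, norm_neg]
  · rw [← sq_eq_sq₀ (norm_nonneg _) (norm_nonneg _), reflT, if_neg hx]
    simp only [norm_sub_sq_real, norm_smul, norm_xibar hx, inner_smul_right,
      real_inner_comm v, Real.norm_eq_abs, mul_one, sq_abs]
    ring

theorem tangP_reflT (hx : ξ x ≠ 0) : tangP d ξ x (reflT d ξ x v) = tangP d ξ x v := by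
  rw [reflT, if_neg hx, tangP, tangP, inner_sub_right, inner_smul_right, inner_xibar_self hx]
  module

end UnitNormal

section WeaveStep

variable {d : ℕ} {ξ : EuclideanSpace ℝ (Fin d) → EuclideanSpace ℝ (Fin d)} {r : ℝ} {z : Phase d}

/-- One step `φ_h = Φ_circle ∘ Φ_bounce ∘ Φ_circle` of the Weave transform. -/
noncomputable def weave (d : ℕ) (ξ : EuclideanSpace ℝ (Fin d) → EuclideanSpace ℝ (Fin d)) (h : ℝ)
    (z : Phase d) : Phase d :=
  circleT d h (bounceT d ξ (circleT d h z))

/-- The autonomous field `𝐚 + (0, 𝐛)` of the limit ODE on phase space. -/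
noncomputable def limitField (d : ℕ) (ξ : EuclideanSpace ℝ (Fin d) → EuclideanSpace ℝ (Fin d))
    (r : ℝ) (z : Phase d) : Phase d :=
  ((2 : ℝ) • z.2, (-2 : ℝ) • tangP d ξ z.1 z.1 + limb d ξ r z.1 z.2)

/-- The squared Euclidean norm `|x|² + |v|²` of a phase point; the norm of `Phase d` itself is the
maximum of the norms of the two components. -/
noncomputable def energy (z : Phase d) : ℝ :=
  ‖z.1‖ ^ 2 + ‖z.2‖ ^ 2

theorem continuous_energy : Continuous (energy (d := d)) := by
  unfold energy
  fun_prop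

theorem isCompact_setOf_energy_le : IsCompact {z : Phase d | energy z ≤ r ^ 2} := by
  refine (isCompact_closedBall (0 : Phase d) |r|).of_isClosed_subset
    (isClosed_le continuous_energy continuous_const) fun z hz => ?_
  have hz' : ‖z.1‖ ^ 2 + ‖z.2‖ ^ 2 ≤ r ^ 2 := hz
  rw [mem_closedBall_zero_iff, norm_prod_le_iff, ← abs_norm z.1, ← abs_norm z.2, ← sq_le_sq,
    ← sq_le_sq]
  constructor <;> nlinarith [sq_nonneg ‖z.1‖, sq_nonneg ‖z.2‖]

theorem energy_circleT (h : ℝ) (z : Phase d) : energy (circleT d h z) = energy z := by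
  simp only [energy, circleT, ← real_inner_self_eq_norm_sq, inner_add_left, inner_add_right,
    inner_smul_left, inner_smul_right, conj_trivial, real_inner_comm z.1 z.2]
  linear_combination (⟪z.1, z.1⟫ + ⟪z.2, z.2⟫) * Real.sin_sq_add_cos_sq h

theorem energy_bounceT (z : Phase d) : energy (bounceT d ξ z) = energy z := by
  simp only [energy, bounceT, norm_reflT]

theorem energy_weave (h : ℝ) (z : Phase d) : energy (weave d ξ h z) = energy z := by
  rw [weave, energy_circleT, energy_bounceT, energy_circleT]

theorem energy_iterate_weave (h : ℝ) (n : ℕ) (z : Phase d) :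
    energy ((weave d ξ h)^[n] z) = energy z := by
  induction n with
  | zero => rfl
  | succ n ih => rw [Function.iterate_succ_apply', energy_weave, ih]

theorem energy_pbf (hz : ξ z.1 ≠ 0) :
    energy (pbf d ξ z) = energy z - ⟪xibar d ξ z.1, z.2⟫ ^ 2 := by
  rw [energy, energy, pbf, norm_tangP_sq hz]
  ring

theorem circleT_zero (z : Phase d) : circleT d 0 z = z := by
  simp [circleT]

theorem pbf_weave_zero (hz : ξ z.1 ≠ 0) : pbf d ξ (weave d ξ 0 z) = pbf d ξ z := by
  rw [weave, circleT_zero, circleT_zero, pbf, bounceT, tangP_reflT hz, pbf]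

theorem bounceT_eq (hz : ξ z.1 ≠ 0) : bounceT d ξ z = (2 : ℝ) • pbf d ξ z - z := by
  refine Prod.ext ?_ (reflT_eq hz)
  change z.1 = (2 : ℝ) • z.1 - z.1
  module

theorem contDiffAt_pbf {n : WithTop ℕ∞} (hξ : ContDiffAt ℝ n ξ z.1) (hz : ξ z.1 ≠ 0) :
    ContDiffAt ℝ n (pbf d ξ) z := by
  have hN : ContDiffAt ℝ n (fun z : Phase d => xibar d ξ z.1) z :=
    (contDiffAt_xibar hξ hz).comp z contDiffAt_fst
  exact contDiffAt_fst.prodMk (contDiffAt_snd.sub ((hN.inner ℝ contDiffAt_snd).smul hN))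

theorem bounceT_eventuallyEq (hξ : ContinuousAt ξ z.1) (hz : ξ z.1 ≠ 0) :
    bounceT d ξ =ᶠ[𝓝 z] fun z => (2 : ℝ) • pbf d ξ z - z :=
  (continuousAt_fst.eventually (hξ.eventually_ne hz)).mono fun _ => bounceT_eq

theorem contDiffAt_bounceT {n : WithTop ℕ∞} (hξ : ContDiffAt ℝ n ξ z.1) (hz : ξ z.1 ≠ 0) :
    ContDiffAt ℝ n (bounceT d ξ) z :=
  (((contDiffAt_pbf hξ hz).const_smul (2 : ℝ)).sub contDiffAt_id).congr_of_eventuallyEq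
    (bounceT_eventuallyEq hξ.continuousAt hz)

theorem contDiff_circleT {n : WithTop ℕ∞} :
    ContDiff ℝ n (fun p : ℝ × Phase d => circleT d p.1 p.2) := by
  unfold circleT
  fun_prop

theorem contDiffAt_pbf_weave {n : WithTop ℕ∞} (hξ : ContDiffAt ℝ n ξ z.1) (hz : ξ z.1 ≠ 0) :
    ContDiffAt ℝ n (fun p : ℝ × Phase d => pbf d ξ (weave d ξ p.1 p.2)) (0, z) := by
  have hbounce : ContDiffAt ℝ n
      (fun p : ℝ × Phase d => bounceT d ξ (circleT d p.1 p.2)) (0, z) := by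
    refine ContDiffAt.comp (g := bounceT d ξ) (0, z) ?_ contDiff_circleT.contDiffAt
    rw [circleT_zero]
    exact contDiffAt_bounceT hξ hz
  have hweave : ContDiffAt ℝ n (fun p : ℝ × Phase d => weave d ξ p.1 p.2) (0, z) :=
    contDiff_circleT.contDiffAt.comp (0, z) (contDiffAt_fst.prodMk hbounce)
  refine ContDiffAt.comp (g := pbf d ξ) (0, z) ?_ hweave
  simp only [weave, circleT_zero]
  exact contDiffAt_pbf hξ hz

theorem contDiffAt_limitField (hξ : ContDiffAt ℝ 2 ξ z.1) (hz : ξ z.1 ≠ 0) :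
    ContDiffAt ℝ 1 (limitField d ξ r) z := by
  have hxibar : ContDiffAt ℝ 2 (xibar d ξ) z.1 := contDiffAt_xibar hξ hz
  have hN : ContDiffAt ℝ 1 (fun z : Phase d => xibar d ξ z.1) z :=
    (hxibar.of_le one_le_two).comp z contDiffAt_fst
  have hD : ContDiffAt ℝ 1 (fun z : Phase d => fderiv ℝ (xibar d ξ) z.1) z :=
    ContDiffAt.comp (g := fderiv ℝ (xibar d ξ)) z (hxibar.fderiv_right (by norm_num)) contDiffAt_fst
  have hNx := hN.inner ℝ contDiffAt_fst
  have hwDw := contDiffAt_snd.inner ℝ (hD.clm_apply contDiffAt_snd)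
  have hw := contDiffAt_snd.norm_sq ℝ (x := z) (n := 1)
  have hx := contDiffAt_fst.norm_sq ℝ (x := z) (n := 1)
  unfold limitField limb tangP
  fun_prop

theorem hasDerivAt_circleT_comp {Z : ℝ → Phase d} {Z' : Phase d} (hZ : HasDerivAt Z Z' 0)
    (hZ0 : Z 0 = z) : HasDerivAt (fun h => circleT d h (Z h)) (Z' + (z.2, -z.1)) 0 := by
  have hcos : HasDerivAt Real.cos 0 0 := by simpa using Real.hasDerivAt_cos 0
  have hsin : HasDerivAt Real.sin 1 0 := by simpa using Real.hasDerivAt_sin 0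
  have hfst := (hcos.fun_smul hZ.fst).fun_add (hsin.fun_smul hZ.snd)
  have hsnd := (hsin.fun_neg.fun_smul hZ.fst).fun_add (hcos.fun_smul hZ.snd)
  refine (hfst.prodMk hsnd).congr_deriv ?_
  ext <;> simp [hZ0, add_comm]

theorem hasDerivAt_xibar_comp {y : ℝ → EuclideanSpace ℝ (Fin d)} {y' : EuclideanSpace ℝ (Fin d)}
    {t : ℝ} (hy : HasDerivAt y y' t) (hξ : ContDiffAt ℝ 1 ξ (y t)) (hyt : ξ (y t) ≠ 0) :
    HasDerivAt (fun s => xibar d ξ (y s)) (fderiv ℝ (xibar d ξ) (y t) y') t :=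
  (differentiableAt_xibar hξ hyt).hasFDerivAt.comp_hasDerivAt t hy

theorem hasDerivAt_pbf_comp {Z : ℝ → Phase d} {Z' : Phase d} {t : ℝ} (hZ : HasDerivAt Z Z' t)
    (hZt : Z t = z) (hξ : ContDiffAt ℝ 1 ξ z.1) (hz : ξ z.1 ≠ 0) :
    HasDerivAt (fun s => pbf d ξ (Z s)) (Z'.1, tangP d ξ z.1 Z'.2
      - ⟪fderiv ℝ (xibar d ξ) z.1 Z'.1, z.2⟫ • xibar d ξ z.1
      - ⟪xibar d ξ z.1, z.2⟫ • fderiv ℝ (xibar d ξ) z.1 Z'.1) t := by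
  subst hZt
  have hx : HasDerivAt (fun s => (Z s).1) Z'.1 t := hZ.fst
  have hv : HasDerivAt (fun s => (Z s).2) Z'.2 t := hZ.snd
  have hN := hasDerivAt_xibar_comp hx hξ hz
  refine (hx.prodMk (hv.fun_sub ((hN.inner ℝ hv).fun_smul hN))).congr_deriv (Prod.ext rfl ?_)
  simp only [tangP]
  module

theorem hasDerivAt_weave (hξ : ContDiffAt ℝ 1 ξ z.1) (hz : ξ z.1 ≠ 0) :
    HasDerivAt (fun h => weave d ξ h z) ((2 : ℝ) • (tangP d ξ z.1 z.2,
      -tangP d ξ z.1 z.1 - ⟪fderiv ℝ (xibar d ξ) z.1 z.2, z.2⟫ • xibar d ξ z.1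
        - ⟪xibar d ξ z.1, z.2⟫ • fderiv ℝ (xibar d ξ) z.1 z.2)) 0 := by
  have hcircle : HasDerivAt (fun h => circleT d h z) (z.2, -z.1) 0 := by
    simpa using hasDerivAt_circleT_comp (hasDerivAt_const 0 z) rfl
  have hpbf := hasDerivAt_pbf_comp hcircle (circleT_zero z) hξ hz
  have hbounce := ((hpbf.fun_const_smul (2 : ℝ)).fun_sub hcircle).congr_of_eventuallyEq
    ((circleT_zero z ▸ hcircle.continuousAt.tendsto).eventually
      (bounceT_eventuallyEq hξ.continuousAt hz))
  refine (hasDerivAt_circleT_comp hbounce (by rw [circleT_zero])).congr_deriv ?_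
  refine Prod.ext ?_ ?_
  · simp only [bounceT, reflT_eq hz, Prod.fst_add, Prod.fst_sub, Prod.smul_fst]
    module
  · simp only [bounceT, tangP, inner_neg_right, Prod.snd_add, Prod.snd_sub, Prod.smul_snd]
    module

/-- The normal part `λ = ⟪ξ̄, v⟫` of the velocity enters the limit only through
`λ² = r² - |P v|² - |x|²`. -/
theorem hasDerivAt_pbf_weave (hξ : ContDiffAt ℝ 1 ξ z.1) (hz : ξ z.1 ≠ 0)
    (hr : energy z = r ^ 2) :
    HasDerivAt (fun h => pbf d ξ (weave d ξ h z)) (limitField d ξ r (pbf d ξ z)) 0 := by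
  have hweave0 : weave d ξ 0 z = (z.1, reflT d ξ z.1 z.2) := by
    rw [weave, circleT_zero, circleT_zero, bounceT]
  have hstep := hasDerivAt_pbf_comp (hasDerivAt_weave hξ hz) hweave0 hξ hz
  refine hstep.congr_deriv (Prod.ext rfl ?_)
  have hradial : r ^ 2 - ‖tangP d ξ z.1 z.2‖ ^ 2 - ‖z.1‖ ^ 2 = ⟪xibar d ξ z.1, z.2⟫ ^ 2 := by
    rw [norm_tangP_sq hz, ← hr, energy]
    ring
  have hunit := inner_xibar_self hz
  have horth := inner_xibar_fderiv_xibar hξ hz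
  have htang := inner_xibar_tangP (v := z.2) hz
  have hsplit : z.2 = tangP d ξ z.1 z.2 + ⟪xibar d ξ z.1, z.2⟫ • xibar d ξ z.1 := by
    rw [tangP]
    module
  have hreflT : reflT d ξ z.1 z.2 =
      tangP d ξ z.1 z.2 - ⟪xibar d ξ z.1, z.2⟫ • xibar d ξ z.1 := by
    rw [reflT_eq hz, tangP]
    module
  simp only [limitField, limb, pbf, hradial, hreflT]
  generalize tangP d ξ z.1 z.2 = w at *
  generalize ⟪xibar d ξ z.1, z.2⟫ = l at *
  simp only [hsplit, tangP, Prod.smul_fst, Prod.smul_snd, map_add, map_smul, inner_add_right,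
    inner_sub_right, inner_neg_right, inner_smul_right, hunit, horth, htang, real_inner_comm w,
    real_inner_comm (xibar d ξ z.1)]
  module

end WeaveStep

section LimitFlow

variable {d : ℕ} {U : EuclideanSpace ℝ (Fin d) → ℝ}
  {ξ : EuclideanSpace ℝ (Fin d) → EuclideanSpace ℝ (Fin d)} {α r t : ℝ} {z : Phase d}

theorem hasDerivAt_inner_xibar_of_solution {ζ : ℝ → Phase d}
    (hζ : HasDerivAt ζ (limitField d ξ r (ζ t)) t) (hξ : ContDiffAt ℝ 1 ξ (ζ t).1)
    (ht : ξ (ζ t).1 ≠ 0) : HasDerivAt (fun s => ⟪xibar d ξ (ζ s).1, (ζ s).2⟫) 0 t := by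
  have hx : HasDerivAt (fun s => (ζ s).1) (limitField d ξ r (ζ t)).1 t := hζ.fst
  have hw : HasDerivAt (fun s => (ζ s).2) (limitField d ξ r (ζ t)).2 t := hζ.snd
  refine ((hasDerivAt_xibar_comp hx hξ ht).inner ℝ hw).congr_deriv ?_
  simp only [limitField, limb, map_smul, inner_smul_right, inner_add_right, inner_xibar_tangP ht,
    inner_xibar_fderiv_xibar hξ ht, inner_xibar_self ht, real_inner_comm (ζ t).2]
  ring

theorem hasDerivAt_potential_of_solution {ζ : ℝ → Phase d}
    (hgrad : HasGradientAt U (ξ (ζ t).1) (ζ t).1)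
    (hζ : HasDerivAt ζ (limitField d ξ r (ζ t)) t) (htang : ⟪ξ (ζ t).1, (ζ t).2⟫ = 0) :
    HasDerivAt (fun s => U (ζ s).1) 0 t := by
  have hx : HasDerivAt (fun s => (ζ s).1) (limitField d ξ r (ζ t)).1 t := hζ.fst
  refine (hgrad.hasFDerivAt.comp_hasDerivAt t hx).congr_deriv ?_
  simp only [limitField, InnerProductSpace.toDual_apply_apply, inner_smul_right, htang, mul_zero]

theorem hasDerivAt_sub_energy_of_solution {ζ : ℝ → Phase d}
    (hζ : HasDerivAt ζ (limitField d ξ r (ζ t)) t) (htang : ⟪xibar d ξ (ζ t).1, (ζ t).2⟫ = 0) :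
    HasDerivAt (fun s => r ^ 2 - energy (ζ s))
      (4 * ⟪(ζ t).2, fderiv ℝ (xibar d ξ) (ζ t).1 (xibar d ξ (ζ t).1)⟫ * (r ^ 2 - energy (ζ t)))
      t := by
  have hx : HasDerivAt (fun s => (ζ s).1) (limitField d ξ r (ζ t)).1 t := hζ.fst
  have hw : HasDerivAt (fun s => (ζ s).2) (limitField d ξ r (ζ t)).2 t := hζ.snd
  refine ((hx.norm_sq.fun_add hw.norm_sq).const_sub (r ^ 2)).congr_deriv ?_
  simp only [energy, limitField, limb, tangP, inner_smul_right, inner_add_right, inner_sub_right,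
    real_inner_comm (xibar d ξ (ζ t).1), htang, real_inner_comm (ζ t).1 (ζ t).2]
  ring

/-- The tangent vectors to the level set `ℳ_α` in the phase-space ball of radius `r`, the state
space of the limit ODE. Tangency is expressed by `⟪ξ x, w⟫ = 0`, so that the set is closed
without excluding zeros of `ξ`. -/
def tangentDisk (d : ℕ) (U : EuclideanSpace ℝ (Fin d) → ℝ)
    (ξ : EuclideanSpace ℝ (Fin d) → EuclideanSpace ℝ (Fin d)) (α r : ℝ) : Set (Phase d) :=
  {z | z.1 ∈ Mlevel d U α ∧ ⟪ξ z.1, z.2⟫ = 0 ∧ energy z ≤ r ^ 2}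

theorem isCompact_tangentDisk (hU : Continuous U) (hξ : Continuous ξ) :
    IsCompact (tangentDisk d U ξ α r) := by
  have hlevel : IsClosed {z : Phase d | z.1 ∈ Mlevel d U α} :=
    isClosed_eq (hU.comp continuous_fst) continuous_const
  have htang : IsClosed {z : Phase d | ⟪ξ z.1, z.2⟫ = 0} :=
    isClosed_eq (by fun_prop) continuous_const
  exact isCompact_setOf_energy_le.of_isClosed_subset
    (hlevel.inter (htang.inter (isClosed_le continuous_energy continuous_const)))
    fun _ hz => hz.2.2

theorem pbf_mem_tangentDisk (hz : ξ z.1 ≠ 0) (hα : z.1 ∈ Mlevel d U α) (hr : energy z ≤ r ^ 2) :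
    pbf d ξ z ∈ tangentDisk d U ξ α r :=
  ⟨hα, (inner_xibar_eq_zero_iff hz).1 (inner_xibar_tangP hz), by
    rw [energy_pbf hz]
    linarith [sq_nonneg ⟪xibar d ξ z.1, z.2⟫]⟩

theorem continuousAt_inner_fderiv_xibar_xibar (hξ : ContDiffAt ℝ 1 ξ z.1) (hz : ξ z.1 ≠ 0) :
    ContinuousAt (fun z : Phase d => ⟪z.2, fderiv ℝ (xibar d ξ) z.1 (xibar d ξ z.1)⟫) z := by
  have hxibar := contDiffAt_xibar hξ hz
  have hN : ContinuousAt (fun z : Phase d => xibar d ξ z.1) z :=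
    ContinuousAt.comp (g := xibar d ξ) hxibar.continuousAt continuousAt_fst
  have hD : ContinuousAt (fun z : Phase d => fderiv ℝ (xibar d ξ) z.1) z :=
    ContinuousAt.comp (g := fderiv ℝ (xibar d ξ))
      (hxibar.fderiv_right (m := 0) (by norm_num)).continuousAt continuousAt_fst
  exact continuousAt_snd.inner (hD.clm_apply hN)

theorem isOpen_setOf_fst_ne_zero (hξ : Continuous ξ) : IsOpen {z : Phase d | ξ z.1 ≠ 0} :=
  isOpen_ne.preimage (hξ.comp continuous_fst)

theorem forwardInvariantIn_tangentDisk (hgrad : ∀ x, HasGradientAt U (ξ x) x)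
    (hξ : ContDiff ℝ 1 ξ) :
    ForwardInvariantIn (limitField d ξ r) {z | ξ z.1 ≠ 0} (tangentDisk d U ξ α r) := by
  intro ζ s t hst hζ hmaps ⟨hα, htang, hr⟩
  have htang' : ∀ u ∈ Icc s t, ⟪xibar d ξ (ζ u).1, (ζ u).2⟫ = 0 := fun u hu => by
    have hderiv := fun q hq =>
      hasDerivAt_inner_xibar_of_solution (hζ q hq) hξ.contDiffAt (hmaps hq)
    rw [constant_of_has_deriv_right_zero (HasDerivAt.continuousOn hderiv)
      (fun q hq => (hderiv q (Ico_subset_Icc_self hq)).hasDerivWithinAt) u hu]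
    exact (inner_xibar_eq_zero_iff (hmaps (left_mem_Icc.2 hst))).2 htang
  have hpotential := fun u hu => hasDerivAt_potential_of_solution (hgrad _) (hζ u hu)
    ((inner_xibar_eq_zero_iff (hmaps hu)).1 (htang' u hu))
  have hdefect := fun u hu => hasDerivAt_sub_energy_of_solution (hζ u hu) (htang' u hu)
  have hcoeff : ContinuousOn (fun u =>
      4 * ⟪(ζ u).2, fderiv ℝ (xibar d ξ) (ζ u).1 (xibar d ξ (ζ u).1)⟫) (Icc s t) := fun u hu =>
    ((continuousAt_inner_fderiv_xibar_xibar hξ.contDiffAt (hmaps hu)).comp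
      (hζ u hu).continuousAt |>.const_mul 4).continuousWithinAt
  have hdefect_nonneg : 0 ≤ r ^ 2 - energy (ζ t) := nonneg_of_hasDerivAt_mul_self
    (f := fun u => r ^ 2 - energy (ζ u)) hst hcoeff hdefect (sub_nonneg.2 hr)
  have ht := right_mem_Icc.2 hst
  refine ⟨?_, (inner_xibar_eq_zero_iff (hmaps ht)).1 (htang' t ht), sub_nonneg.1 hdefect_nonneg⟩
  exact (constant_of_has_deriv_right_zero (HasDerivAt.continuousOn hpotential)
    (fun u hu => (hpotential u (Ico_subset_Icc_self hu)).hasDerivWithinAt) t ht).trans hα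

end LimitFlow

section Convergence

variable {d : ℕ} {ξ : EuclideanSpace ℝ (Fin d) → EuclideanSpace ℝ (Fin d)} {r T : ℝ}

theorem exists_eventually_forall_norm_pbf_weave_sub_le (hξ : ContDiff ℝ 2 ξ)
    {S : Set (EuclideanSpace ℝ (Fin d))} (hS : IsCompact S) (hSξ : ∀ y ∈ S, ξ y ≠ 0) :
    ∃ C : ℝ, ∀ᶠ h in 𝓝 (0 : ℝ), ∀ z : Phase d, z.1 ∈ S → energy z = r ^ 2 →
      ‖pbf d ξ (weave d ξ h z) - pbf d ξ z - h • limitField d ξ r (pbf d ξ z)‖ ≤ C * h ^ 2 := by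
  have hK : IsCompact {z : Phase d | z.1 ∈ S ∧ energy z = r ^ 2} :=
    isCompact_setOf_energy_le.of_isClosed_subset ((hS.isClosed.preimage continuous_fst).inter
      (isClosed_eq continuous_energy continuous_const)) fun _ hz => hz.2.le
  obtain ⟨C, hC⟩ := exists_eventually_forall_norm_step_sub_le hK
    (fun z hz => contDiffAt_pbf_weave hξ.contDiffAt (hSξ _ hz.1))
    (fun z hz => hasDerivAt_pbf_weave (hξ.contDiffAt.of_le one_le_two) (hSξ _ hz.1) hz.2)
  refine ⟨C, hC.mono fun h hh z hzS hz => ?_⟩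
  simpa only [pbf_weave_zero (hSξ _ hzS)] using hh z ⟨hzS, hz⟩

theorem exists_forall_norm_pbf_iterate_weave_sub_solution_le (hξ : ContDiff ℝ 2 ξ)
    {z₀ : Phase d} (hz₀ : energy z₀ = r ^ 2) (hT : 0 ≤ T) {ζ : ℝ → Phase d}
    (hζ0 : ζ 0 = pbf d ξ z₀) (hζ : ∀ t ∈ Icc 0 T, HasDerivAt ζ (limitField d ξ r (ζ t)) t)
    (hζξ : ∀ t ∈ Icc 0 T, ξ (ζ t).1 ≠ 0) :
    ∃ H > 0, ∃ B > 0, ∀ h, 0 < h → h < H → ∀ t ∈ Icc 0 T,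
      ‖pbf d ξ ((weave d ξ h)^[⌊t / h⌋₊] z₀) - ζ t‖ ≤ h * B := by
  have hO : IsOpen {z : Phase d | ξ z.1 ≠ 0} := isOpen_setOf_fst_ne_zero hξ.continuous
  have horbit : IsCompact (ζ '' Icc 0 T) := isCompact_Icc.image_of_continuousOn
    (HasDerivAt.continuousOn hζ)
  obtain ⟨δ, hδ, hδO⟩ := horbit.exists_cthickening_subset_open hO (image_subset_iff.2 hζξ)
  have hK : IsCompact (Metric.cthickening δ (ζ '' Icc 0 T)) := horbit.cthickening
  obtain ⟨C, hC⟩ := exists_eventually_forall_norm_pbf_weave_sub_le (r := r) hξ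
    (hK.image continuous_fst) (forall_mem_image.2 hδO)
  obtain ⟨H₁, hH₁, hstep⟩ := Metric.eventually_nhds_iff.1 hC
  obtain ⟨H₂, hH₂, B, hB, heuler⟩ := exists_forall_norm_euler_floor_sub_solution_le hK
    (fun z hz => contDiffAt_limitField hξ.contDiffAt (hδO hz)) hT hζ
    (fun t ht => Metric.self_subset_cthickening _ (mem_image_of_mem ζ ht)) (abs_nonneg C) hδ
  refine ⟨min H₁ H₂, lt_min hH₁ hH₂, B, hB, fun h hh hhH => ?_⟩
  refine heuler h hh (hhH.trans_le (min_le_right _ _)) (fun n => pbf d ξ ((weave d ξ h)^[n] z₀))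
    hζ0.symm fun n hn hnear => ?_
  have hmem : pbf d ξ ((weave d ξ h)^[n] z₀) ∈ Metric.cthickening δ (ζ '' Icc 0 T) :=
    Metric.mem_cthickening_of_dist_le _ (ζ (n * h)) _ _
      (mem_image_of_mem ζ ⟨by positivity, hn⟩) (dist_eq_norm _ (ζ _) ▸ hnear)
  have hh₁ : dist h 0 < H₁ := by
    rw [dist_zero_right, Real.norm_of_nonneg hh.le]
    exact hhH.trans_le (min_le_left _ _)
  refine ⟨hmem, ?_⟩
  simp only [Function.iterate_succ_apply']
  refine (hstep hh₁ ((weave d ξ h)^[n] z₀) ⟨_, hmem, rfl⟩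
    ((energy_iterate_weave h n z₀).trans hz₀)).trans ?_
  gcongr
  exact le_abs_self C

end Convergence

theorem stmt_14_general (d : ℕ) (U : EuclideanSpace ℝ (Fin d) → ℝ)
    (ξ : EuclideanSpace ℝ (Fin d) → EuclideanSpace ℝ (Fin d))
    (hgrad : ∀ x, HasGradientAt U (ξ x) x) (hξ : ContDiff ℝ 2 ξ) (α : ℝ)
    (x v : EuclideanSpace ℝ (Fin d)) (hx : x ∈ Mlevel d U α) (r : ℝ)
    (hr : ‖x‖ ^ 2 + ‖v‖ ^ 2 = r ^ 2)
    (hreg : ∀ y ∈ Mlevel d U α, ‖y‖ ^ 2 ≤ r ^ 2 → ξ y ≠ 0) (T : ℝ) (hT : 0 ≤ T) :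
    ∃ ζ : ℝ → Phase d,
      (ζ 0 = (x, tangP d ξ x v) ∧ ∀ t ∈ Icc 0 T, HasDerivAt ζ (limitField d ξ r (ζ t)) t) ∧
      (∀ ζ' : ℝ → Phase d, (ζ' 0 = (x, tangP d ξ x v) ∧
        ∀ t ∈ Icc 0 T, HasDerivAt ζ' (limitField d ξ r (ζ' t)) t) → ∀ t ∈ Icc 0 T, ζ' t = ζ t) ∧
      ∃ H : ℝ, 0 < H ∧ ∃ C : ℝ, 0 < C ∧ ∀ h : ℝ, 0 < h → h < H → ∀ t ∈ Icc 0 T,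
        ‖pbf d ξ ((weave d ξ h)^[⌊t / h⌋₊] (x, v)) - ζ t‖ ≤ h * C := by
  have hU : Continuous U := continuous_iff_continuousAt.2 fun y => (hgrad y).continuousAt
  have hΓ : IsCompact (tangentDisk d U ξ α r) := isCompact_tangentDisk hU hξ.continuous
  have hO : IsOpen {z : Phase d | ξ z.1 ≠ 0} := isOpen_setOf_fst_ne_zero hξ.continuous
  have hΓO : tangentDisk d U ξ α r ⊆ {z | ξ z.1 ≠ 0} := fun z hz =>
    hreg z.1 hz.1 (le_of_add_le_of_nonneg_left hz.2.2 (sq_nonneg _))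
  have hc : ∀ z ∈ {z : Phase d | ξ z.1 ≠ 0}, ContDiffAt ℝ 1 (limitField d ξ r) z :=
    fun z hz => contDiffAt_limitField hξ.contDiffAt hz
  have hinv : ForwardInvariantIn (limitField d ξ r) {z | ξ z.1 ≠ 0} (tangentDisk d U ξ α r) :=
    forwardInvariantIn_tangentDisk hgrad (hξ.of_le one_le_two)
  have hxξ : ξ x ≠ 0 := hreg x hx (by nlinarith [sq_nonneg ‖v‖])
  have hstart : (x, tangP d ξ x v) ∈ tangentDisk d U ξ α r :=
    pbf_mem_tangentDisk (z := (x, v)) hxξ hx hr.le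
  obtain ⟨ζ, hζ0, hζ⟩ := hinv.exists_solution hO hΓ hΓO hc hstart hT
  have hζΓ := hinv.mapsTo hO hΓ.isClosed hΓO hζ (hζ0 ▸ hstart)
  obtain ⟨L, hL⟩ := exists_lipschitzOnWith_of_contDiffAt hΓ fun z hz => hc z (hΓO hz)
  refine ⟨ζ, ⟨hζ0, hζ⟩, fun ζ' ⟨hζ'0, hζ'⟩ => ?_, ?_⟩
  · exact eqOn_of_hasDerivAt_of_mapsTo hL hζ'
      (hinv.mapsTo hO hΓ.isClosed hΓO hζ' (hζ'0 ▸ hstart)) hζ hζΓ (hζ'0.trans hζ0.symm)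
  · exact exists_forall_norm_pbf_iterate_weave_sub_solution_le (z₀ := (x, v)) hξ hr hT hζ0 hζ
      fun t ht => hΓO (hζΓ ht)

/-- Limit of the Weave transform: the projected discrete Weave process `𝐩(z^h(t))`
converges, with rate `O(h)` uniformly on `[0,T]`, to the unique solution of the limit
ODE `ζ' = 𝐚(ζ) + (0, 𝐛(ζ))`, `ζ(0) = (x, P(x)v)`, with `𝐚(x,w) = 2(w, −P(x)x)`. -/
theorem stmt_14 (d : ℕ) (U : EuclideanSpace ℝ (Fin d) → ℝ)
    (ξ : EuclideanSpace ℝ (Fin d) → EuclideanSpace ℝ (Fin d))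
    (hgrad : ∀ x, HasGradientAt U (ξ x) x) (hξ_C3 : ContDiff ℝ 3 ξ)
    (hcoerc : Filter.Tendsto U (Filter.cocompact (EuclideanSpace ℝ (Fin d))) Filter.atTop)
    (α : ℝ) (hne : (Mlevel d U α).Nonempty) (hsub : Mlevel d U α ⊆ {x | ξ x ≠ 0})
    (x v : EuclideanSpace ℝ (Fin d)) (hx : x ∈ Mlevel d U α) (T : ℝ) (hT : 0 < T) :
    -- `r = |z^h(0)|`
    let r : ℝ := Real.sqrt (‖x‖ ^ 2 + ‖v‖ ^ 2)
    -- the vector field `𝐚 + (0,𝐛)` of the limit ODE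
    let cvec : EuclideanSpace ℝ (Fin d) × EuclideanSpace ℝ (Fin d) →
        EuclideanSpace ℝ (Fin d) × EuclideanSpace ℝ (Fin d) := fun ζ =>
      ((2 : ℝ) • ζ.2, (-2 : ℝ) • tangP d ξ ζ.1 ζ.1 + limb d ξ r ζ.1 ζ.2)
    -- the piecewise-constant interpolation `z^h(t) = (φ_h)^n(x,v)` for `nh ≤ t < (n+1)h`
    let zh : ℝ → ℝ → EuclideanSpace ℝ (Fin d) × EuclideanSpace ℝ (Fin d) := fun h t =>
      (fun z => circleT d h (bounceT d ξ (circleT d h z)))^[⌊t / h⌋₊] (x, v)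
    ∃ ζ : ℝ → EuclideanSpace ℝ (Fin d) × EuclideanSpace ℝ (Fin d),
      -- `ζ` solves the limit ODE on `[0,T]` with initial value `(x, P(x)v)`
      (ζ 0 = (x, tangP d ξ x v) ∧ ∀ t ∈ Set.Icc (0 : ℝ) T, HasDerivAt ζ (cvec (ζ t)) t) ∧
      -- `ζ` is the unique such solution
      (∀ ζ' : ℝ → EuclideanSpace ℝ (Fin d) × EuclideanSpace ℝ (Fin d),
        (ζ' 0 = (x, tangP d ξ x v) ∧
          ∀ t ∈ Set.Icc (0 : ℝ) T, HasDerivAt ζ' (cvec (ζ' t)) t) →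
        ∀ t ∈ Set.Icc (0 : ℝ) T, ζ' t = ζ t) ∧
      -- and `sup_{0≤t≤T} |𝐩(z^h(t)) − ζ(t)| ≤ h C` for all small `h > 0`
      ∃ H : ℝ, 0 < H ∧ ∃ C : ℝ, 0 < C ∧ ∀ h : ℝ, 0 < h → h < H →
        ∀ t ∈ Set.Icc (0 : ℝ) T, ‖pbf d ξ (zh h t) - ζ t‖ ≤ h * C := by
  exact stmt_14_general d U ξ hgrad (hξ_C3.of_le (by norm_num)) α x v hx _
    (Real.sq_sqrt (by positivity)).symm (fun y hy _ => hsub hy) T hT.le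
end

section
/- Fix d ∈ ℕ, h > 0, and let κ(x,v) = (x,−v) on ℝ^d × ℝ^d. Let K : ℝ^d → ℝ be differentiable with K(v) = K(−v) for all v, and let ξ : ℝ^d → ℝ^d be a Borel-measurable vector field defining the reflection R as for the bounce transform. Define the Hug transform φ_h(x,v) = (x_h, v_h) by x_{h/2} = x + (h/2)∇K(v), v_h = R(x_{h/2})v, x_h = x_{h/2} + (h/2)∇K(v_h). Then κ∘φ_h∘κ∘φ_h = id, φ_h preserves Lebesgue measure on ℝ^{2d}, and consequently φ_h is (Leb,κ)-reversible. -/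
open MeasureTheory
open scoped ENNReal RealInnerProductSpace

/-- A transform `Φ` is `μ`-reversible if `μ(A ∩ Φ⁻¹(B)) = μ(B ∩ Φ⁻¹(A))` for all
measurable `A`, `B`. -/
def MeasRev {E : Type*} [MeasurableSpace E] (μ : Measure E) (Φ : E → E) : Prop :=
  ∀ A B : Set E, MeasurableSet A → MeasurableSet B → μ (A ∩ Φ ⁻¹' B) = μ (B ∩ Φ ⁻¹' A)

/-- A transform `Φ` is `(μ,κ)`-reversible if `κ ∘ Φ` is `μ`-reversible. -/
def FlipRev {E : Type*} [MeasurableSpace E] (μ : Measure E) (κ Φ : E → E) : Prop :=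
  MeasRev μ (κ ∘ Φ)

/-- The flip `κ(x,v) = (x,-v)` on `ℝ^d × ℝ^d`. -/
def flipT (d : ℕ) (z : EuclideanSpace ℝ (Fin d) × EuclideanSpace ℝ (Fin d)) :
    EuclideanSpace ℝ (Fin d) × EuclideanSpace ℝ (Fin d) :=
  (z.1, -z.2)

/-- The Hug transform: `x_{h/2} = x + (h/2)∇K(v)`, `v_h = R(x_{h/2})v`,
`x_h = x_{h/2} + (h/2)∇K(v_h)`. -/
noncomputable def hugT (d : ℕ) (h : ℝ) (K : EuclideanSpace ℝ (Fin d) → ℝ)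
    (ξ : EuclideanSpace ℝ (Fin d) → EuclideanSpace ℝ (Fin d))
    (z : EuclideanSpace ℝ (Fin d) × EuclideanSpace ℝ (Fin d)) :
    EuclideanSpace ℝ (Fin d) × EuclideanSpace ℝ (Fin d) :=
  let xh2 := z.1 + (h / 2) • gradient K z.2
  let vh := reflT d ξ xh2 z.2
  (xh2 + (h / 2) • gradient K vh, vh)

/-!
Let `κ` be the flip, `D` the half-step drift `(x, v) ↦ (x + (h / 2) ∇K v, v)` and `B` the bounce
`(x, v) ↦ (x, R x v)`, so that the Hug transform is the palindrome `D ∘ B ∘ D`. Since `∇K` is odd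
and each `-R x` is an involution, `κ ∘ D` and `κ ∘ B` are involutions; that is, conjugation by `κ`
inverts `D` and `B`, and hence any palindrome in them. Both maps are skew products whose fibre maps
(translations and linear isometries) preserve Lebesgue measure, so by Fubini they preserve the
product measure. Finally, a measure-preserving involution is reversible.
-/

open Function

section Reversibility

theorem MeasRev.of_involutive {E : Type*} [MeasurableSpace E] {μ : Measure E} {Φ : E → E}
    (hΦ : MeasurePreserving Φ μ μ) (hinv : Involutive Φ) : MeasRev μ Φ := by
  intro A B hA hB
  calc μ (A ∩ Φ ⁻¹' B) = μ (Φ ⁻¹' (A ∩ Φ ⁻¹' B)) :=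
        (hΦ.measure_preimage (hA.inter (hΦ.measurable hB)).nullMeasurableSet).symm
    _ = μ (B ∩ Φ ⁻¹' A) := by
        rw [Set.preimage_inter, ← Set.preimage_comp, hinv.comp_self, Set.preimage_id,
          Set.inter_comm]

theorem involutive_comp_palindrome {E : Type*} {κ D B : E → E} (hκ : Involutive κ)
    (hD : Involutive (κ ∘ D)) (hB : Involutive (κ ∘ B)) : Involutive (κ ∘ D ∘ B ∘ D) := by
  have conj {F : E → E} (hF : Involutive (κ ∘ F)) (z : E) : F (κ (F z)) = κ z :=
    hκ.injective ((hF z).trans (hκ z).symm)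
  intro z
  simp only [comp_apply, conj hD, conj hB, hκ z]

end Reversibility

section Gradient

variable {𝕜 F : Type*} [RCLike 𝕜] [NormedAddCommGroup F] [InnerProductSpace 𝕜 F]
  [CompleteSpace F]

theorem odd_gradient_of_even {f : F → 𝕜} (hf : f.Even) : (gradient f).Odd := by
  intro v
  have hfderiv : fderiv 𝕜 f (-v) = -fderiv 𝕜 f v := by
    simpa only [neg_smul, one_smul, hf _, neg_neg] using
      fderiv_comp_smul (f := f) (x := -v) (-1 : 𝕜)
  rw [gradient, hfderiv, map_neg, gradient]

theorem measurable_gradient [MeasurableSpace F] [BorelSpace F] (f : F → 𝕜) :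
    Measurable (gradient f) :=
  (InnerProductSpace.toDual 𝕜 F).symm.continuous.measurable.comp (measurable_fderiv 𝕜 f)

end Gradient

section Reflection

variable {d : ℕ} {ξ : EuclideanSpace ℝ (Fin d) → EuclideanSpace ℝ (Fin d)}

theorem exists_reflT_eq_reflection (x : EuclideanSpace ℝ (Fin d)) :
    ∃ S : Submodule ℝ (EuclideanSpace ℝ (Fin d)), reflT d ξ x = S.reflection := by
  by_cases hx : ξ x = 0
  · refine ⟨⊥, funext fun v => ?_⟩
    simp only [reflT, if_pos hx, Submodule.reflection_bot, LinearIsometryEquiv.coe_neg]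
  · refine ⟨(ℝ ∙ ξ x)ᗮ, funext fun v => ?_⟩
    have hproj : (2 * ⟪xibar d ξ x, v⟫) • xibar d ξ x = 2 • (⟪ξ x, v⟫ / ‖ξ x‖ ^ 2) • ξ x := by
      rw [xibar, real_inner_smul_left]
      module
    rw [reflT, if_neg hx, hproj, Submodule.reflection_orthogonal_apply,
      Submodule.reflection_singleton_apply, neg_sub, RCLike.ofReal_real_eq_id, id]

theorem involutive_neg_reflT (x : EuclideanSpace ℝ (Fin d)) :
    Involutive fun v => -reflT d ξ x v := by
  obtain ⟨S, hS⟩ := exists_reflT_eq_reflection (ξ := ξ) x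
  simpa only [hS, ← Submodule.reflection_orthogonal_apply] using Sᗮ.reflection_involutive

theorem measurePreserving_reflT (x : EuclideanSpace ℝ (Fin d)) :
    MeasurePreserving (reflT d ξ x) volume volume := by
  obtain ⟨S, hS⟩ := exists_reflT_eq_reflection (ξ := ξ) x
  exact hS ▸ S.reflection.measurePreserving

theorem measurable_xibar (hξ : Measurable ξ) : Measurable (xibar d ξ) :=
  hξ.norm.inv.smul hξ

theorem measurable_uncurry_reflT (hξ : Measurable ξ) : Measurable (uncurry (reflT d ξ)) := by
  have hdir : Measurable fun z : EuclideanSpace ℝ (Fin d) × EuclideanSpace ℝ (Fin d) =>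
      xibar d ξ z.1 := (measurable_xibar hξ).comp measurable_fst
  refine Measurable.ite (hξ.comp measurable_fst (measurableSet_singleton 0)) measurable_snd.neg ?_
  exact measurable_snd.sub (((hdir.inner (𝕜 := ℝ) measurable_snd).const_mul 2).smul hdir)

end Reflection

section Splitting

variable {X V : Type*}

/-- The flip `(x, v) ↦ (x, -v)` for positions and velocities in possibly different spaces. -/
def velocityFlip [Neg V] (z : X × V) : X × V :=
  (z.1, -z.2)

/-- The free motion `(x, v) ↦ (x + g v, v)`, the first and last stage of the Hug transform. -/
def drift [Add X] (g : V → X) (z : X × V) : X × V :=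
  (z.1 + g z.2, z.2)

/-- The bounce `(x, v) ↦ (x, R x v)`, the middle stage of the Hug transform. -/
def bounce (R : X → V → V) (z : X × V) : X × V :=
  (z.1, R z.1 z.2)

/-- The Hug transform with an arbitrary free motion `g` and fibrewise bounce `R`; up to definitional
unfolding, `hugT d h K ξ` is the case `g = (h / 2) • ∇K`, `R = reflT d ξ`. -/
def hug [Add X] (g : V → X) (R : X → V → V) : X × V → X × V :=
  drift g ∘ bounce R ∘ drift g

theorem involutive_velocityFlip [InvolutiveNeg V] :
    Involutive (velocityFlip : X × V → X × V) :=
  fun z => by simp only [velocityFlip, neg_neg]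

theorem involutive_velocityFlip_comp_drift [AddGroup X] [InvolutiveNeg V] {g : V → X}
    (hg : g.Odd) : Involutive (velocityFlip ∘ drift g) :=
  fun z => by simp only [comp_apply, velocityFlip, drift, hg z.2, add_neg_cancel_right, neg_neg]

theorem involutive_velocityFlip_comp_bounce [Neg V] {R : X → V → V}
    (hR : ∀ x, Involutive fun v => -R x v) : Involutive (velocityFlip ∘ bounce R) :=
  fun z => Prod.ext rfl (hR z.1 z.2)

variable [MeasurableSpace X] [MeasurableSpace V] {μ : Measure X} {ν : Measure V}
  [SFinite μ] [SFinite ν]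

theorem measurePreserving_velocityFlip [Neg V] [MeasurableNeg V] [ν.IsNegInvariant] :
    MeasurePreserving velocityFlip (μ.prod ν) (μ.prod ν) :=
  (MeasurePreserving.id μ).prod (Measure.measurePreserving_neg ν)

theorem measurePreserving_bounce {R : X → V → V} (hR : Measurable (uncurry R))
    (hRν : ∀ x, MeasurePreserving (R x) ν ν) :
    MeasurePreserving (bounce R) (μ.prod ν) (μ.prod ν) :=
  (MeasurePreserving.id μ).skew_product hR (.of_forall fun x => (hRν x).map_eq)

theorem measurePreserving_drift [AddGroup X] [MeasurableAdd₂ X] [μ.IsAddRightInvariant]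
    {g : V → X} (hg : Measurable g) : MeasurePreserving (drift g) (μ.prod ν) (μ.prod ν) :=
  -- With the factors swapped, `drift g` is a bounce whose fibre maps are translations.
  have hbounce : MeasurePreserving (bounce fun v x => x + g v) (ν.prod μ) (ν.prod μ) :=
    measurePreserving_bounce (measurable_snd.add (hg.comp measurable_fst))
      fun v => measurePreserving_add_right μ (g v)
  Measure.measurePreserving_swap.comp (hbounce.comp Measure.measurePreserving_swap)

theorem stmt_19_general [AddGroup X] [MeasurableAdd₂ X] [μ.IsAddRightInvariant]
    [InvolutiveNeg V] [MeasurableNeg V] [ν.IsNegInvariant] {g : V → X} {R : X → V → V}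
    (hg : Measurable g) (hg_odd : g.Odd) (hR : Measurable (uncurry R))
    (hRν : ∀ x, MeasurePreserving (R x) ν ν) (hR_inv : ∀ x, Involutive fun v => -R x v) :
    (velocityFlip ∘ hug g R ∘ velocityFlip ∘ hug g R = id) ∧
    MeasurePreserving (hug g R) (μ.prod ν) (μ.prod ν) ∧
    FlipRev (μ.prod ν) velocityFlip (hug g R) := by
  have hinv : Involutive (velocityFlip ∘ hug g R) :=
    involutive_comp_palindrome involutive_velocityFlip
      (involutive_velocityFlip_comp_drift hg_odd) (involutive_velocityFlip_comp_bounce hR_inv)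
  have hdrift : MeasurePreserving (drift g) (μ.prod ν) (μ.prod ν) := measurePreserving_drift hg
  have hmp : MeasurePreserving (hug g R) (μ.prod ν) (μ.prod ν) :=
    hdrift.comp ((measurePreserving_bounce hR hRν).comp hdrift)
  exact ⟨hinv.comp_self, hmp, .of_involutive (measurePreserving_velocityFlip.comp hmp) hinv⟩

end Splitting

/-- The Hug transform satisfies `κ∘φ_h∘κ∘φ_h = id`, preserves Lebesgue measure on
`ℝ^{2d}`, and consequently is `(Leb,κ)`-reversible. -/
theorem stmt_19 (d : ℕ) (h : ℝ) (hh : 0 < h)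
    (K : EuclideanSpace ℝ (Fin d) → ℝ) (hK_diff : Differentiable ℝ K)
    (hK_even : ∀ v : EuclideanSpace ℝ (Fin d), K (-v) = K v)
    (ξ : EuclideanSpace ℝ (Fin d) → EuclideanSpace ℝ (Fin d)) (hξ_meas : Measurable ξ) :
    (flipT d ∘ hugT d h K ξ ∘ flipT d ∘ hugT d h K ξ = id) ∧
    MeasurePreserving (hugT d h K ξ) volume volume ∧
    FlipRev (volume : Measure (EuclideanSpace ℝ (Fin d) × EuclideanSpace ℝ (Fin d)))
      (flipT d) (hugT d h K ξ) :=
  stmt_19_general (g := (h / 2) • gradient K) (R := reflT d ξ)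
    ((measurable_gradient K).const_smul (h / 2)) ((odd_gradient_of_even hK_even).const_smul (h / 2))
    (measurable_uncurry_reflT hξ_meas) measurePreserving_reflT involutive_neg_reflT
end
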